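/- arXiv:2604.13212 — 2 statements merged into one kernel-verified Lean document; each statement's English description precedes it below -/
import Mathlib

section
/- Suppose H is a connected graph and G is a subdivision of H in which every edge of H is replaced by internally disjoint paths each of length at least 2r, for some integer r ≥ 2. Then ST^(4)*(G) ≤ 2 + 1/r. -/
/-!
The graph `G` is `ST⁽⁴⁾`-`(r + 1, r)`-degenerate, which gives the bound `(2r + 1) / r = 2 + 1 / r`.

Operating `r` times on a vertex without saving removes it and costs each neighbour `r` units of
shield. First all branch vertices are removed in this way, and then each path is shortened from one
side until it has exactly `2r - 1` vertices `y_1, …, y_{2r-1}`. Now every target is `r`, the shields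
of the two ends are `1`, and all other shields are `r + 1`.

On such a path only the even vertices operate, in two sweeps (`IsLevelling.sweepUp` and
`IsLevelling.sweepDown`). For `j = 1, …, r - 1`, the vertex `y_{2j}` operates `r - j` times saving
`y_{2j-1}`; this is legal because `S + T` equals `2r + 1` at `y_{2j}` and at most `r + j` at
`y_{2j-1}` (`r + 1` if `j = 1`). Then for `j = r - 1, …, 1`, the vertex `y_{2j}` performs its last `j`
operations saving `y_{2j+1}`; this is legal because `S + T` is `r + 1 + j` at `y_{2j}` and `r` at
`y_{2j+1}`. An inner odd vertex `y_{2j-1}` is hit `r - j + 1` times from below and `j` times from above,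
which is exactly its shield `r + 1`, and each end of the path is hit once. The remaining odd
vertices are pairwise nonadjacent.

All paths are treated simultaneously, using the levels of `IsLevelling`; the batches of operations
of one level are justified by `ST4DegOn.parallel`.
-/

open scoped Classical

noncomputable section

namespace StrictDeg

/-- The state of the `ShadeSave` process: the active vertex set (the vertex set of the
current induced subgraph), the current shield, and the current target. -/
structure State (V : Type) where
  A : Finset V
  S : V → ℕ
  T : V → ℕ

variable {V : Type}

/-- The output of the operation `ShadeSave(G[A], S, T, u, W)`. -/
def applyStep (G : SimpleGraph V) (st : State V) (u : V) (W : Finset V) : State V where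
  A := if st.T u = 1 then st.A.erase u else st.A
  S := fun v => if G.Adj u v ∧ v ∈ st.A ∧ v ∉ W then st.S v - 1 else st.S v
  T := fun v => if v = u ∧ 1 < st.T u then st.T u - 1 else st.T v

/-- Legality of the operation `ShadeSave(G[A], S, T, u, W)`:  `u` is a vertex of the current
graph, `W` is a set of neighbors of `u` in the current graph,
`S u + T u > ∑_{w ∈ W} (S w + T w)`, and the output shield is nonnegative (in `ℕ` terms:
every neighbor of `u` in the current graph that is not saved has shield value at least 1). -/
def LegalStep (G : SimpleGraph V) (st : State V) (u : V) (W : Finset V) : Prop :=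
  u ∈ st.A ∧
  (∀ w ∈ W, w ∈ st.A ∧ G.Adj u w) ∧
  (∑ w ∈ W, (st.S w + st.T w)) < st.S u + st.T u ∧
  (∀ v ∈ st.A, G.Adj u v → v ∉ W → 1 ≤ st.S v)

/-- `LegalSeq G st l` means `l` is a legal sequence of `ShadeSave` operations starting
from the state `st`. -/
def LegalSeq (G : SimpleGraph V) : State V → List (V × Finset V) → Prop
  | _, [] => True
  | st, op :: rest => LegalStep G st op.1 op.2 ∧ LegalSeq G (applyStep G st op.1 op.2) rest

/-- The final state after applying the operations in `l` in order. -/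
def finalState (G : SimpleGraph V) (st : State V) (l : List (V × Finset V)) : State V :=
  l.foldl (fun s op => applyStep G s op.1 op.2) st

/-- The induced subgraph of `G` on `A`, with shield `S` and target `T`, admits a complete
legal sequence, i.e. it is `ST⁽³⁾`-`(S,T)`-degenerate. -/
def ST3DegOn (G : SimpleGraph V) (A : Finset V) (S T : V → ℕ) : Prop :=
  ∃ l : List (V × Finset V),
    LegalSeq G ⟨A, S, T⟩ l ∧ (finalState G ⟨A, S, T⟩ l).A = ∅

/-- The induced subgraph of `G` on `A`, with shield `S` and target `T`, admits a complete
restricted (every operation saves on at most one vertex) legal sequence, i.e. it is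
`ST⁽⁴⁾`-`(S,T)`-degenerate. -/
def ST4DegOn (G : SimpleGraph V) (A : Finset V) (S T : V → ℕ) : Prop :=
  ∃ l : List (V × Finset V),
    LegalSeq G ⟨A, S, T⟩ l ∧ (∀ op ∈ l, op.2.card ≤ 1) ∧
      (finalState G ⟨A, S, T⟩ l).A = ∅

/-- `G` is `ST⁽³⁾`-`(S,T)`-degenerate. -/
def ST3Deg [Fintype V] (G : SimpleGraph V) (S T : V → ℕ) : Prop :=
  ST3DegOn G Finset.univ S T

/-- `G` is `ST⁽⁴⁾`-`(S,T)`-degenerate. -/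
def ST4Deg [Fintype V] (G : SimpleGraph V) (S T : V → ℕ) : Prop :=
  ST4DegOn G Finset.univ S T

/-- The fractional strict type-3 degeneracy
`ST⁽³⁾*(G) = inf {(s+t)/t : G is ST⁽³⁾-(s,t)-degenerate}`. -/
def ST3Star [Fintype V] (G : SimpleGraph V) : ℝ :=
  sInf { x : ℝ | ∃ s t : ℕ, 1 ≤ t ∧ ST3Deg G (fun _ => s) (fun _ => t) ∧
    x = ((s : ℝ) + t) / t }

/-- The fractional strict type-4 degeneracy
`ST⁽⁴⁾*(G) = inf {(s+t)/t : G is ST⁽⁴⁾-(s,t)-degenerate}`. -/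
def ST4Star [Fintype V] (G : SimpleGraph V) : ℝ :=
  sInf { x : ℝ | ∃ s t : ℕ, 1 ≤ t ∧ ST4Deg G (fun _ => s) (fun _ => t) ∧
    x = ((s : ℝ) + t) / t }

/-- A cover `𝓗 = (L, H)` of the graph `G`. -/
structure Cover (G : SimpleGraph V) where
  /-- The vertex type of the cover graph `H`. -/
  U : Type
  fin : Fintype U
  /-- The cover graph. -/
  H : SimpleGraph U
  /-- The lists: `L v` is the part of the partition of `V(H)` corresponding to `v`. -/
  L : V → Finset U
  part : ∀ x : U, ∃! v : V, x ∈ L v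
  indep : ∀ v : V, ∀ x ∈ L v, ∀ y ∈ L v, ¬ H.Adj x y
  cross : ∀ u v : V, ∀ x ∈ L u, ∀ y ∈ L v, H.Adj x y → G.Adj u v
  matching : ∀ u v : V, G.Adj u v → ∀ x ∈ L u, ∀ y ∈ L v, ∀ y' ∈ L v,
      H.Adj x y → H.Adj x y' → y = y'

/-- `G` is `(𝓗, b)`-colorable: there is an independent set of the cover graph meeting
every list in at least `b` vertices. -/
def Cover.Colorable {G : SimpleGraph V} (C : Cover G) (b : ℕ) : Prop :=
  ∃ I : Finset C.U, (∀ x ∈ I, ∀ y ∈ I, ¬ C.H.Adj x y) ∧ ∀ v : V, b ≤ (I ∩ C.L v).card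

/-- `G` is `(a,b)`-DP-colorable. -/
def DPColorable (G : SimpleGraph V) (a b : ℕ) : Prop :=
  ∀ C : Cover G, (∀ v : V, (C.L v).card = a) → C.Colorable b

/-- The fractional DP-chromatic number
`χ*_DP(G) = inf {a/b : G is (a,b)-DP-colorable}`. -/
def DPStar (G : SimpleGraph V) : ℝ :=
  sInf { x : ℝ | ∃ a b : ℕ, 1 ≤ b ∧ b ≤ a ∧ DPColorable G a b ∧ x = (a : ℝ) / b }

/-- `G` is `(F₁, F₂)`-DP-colorable. -/
def DPColorableFn (G : SimpleGraph V) (F₁ F₂ : V → ℕ) : Prop :=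
  ∀ C : Cover G, (∀ v : V, (C.L v).card = F₁ v) →
    ∃ I : Finset C.U, (∀ x ∈ I, ∀ y ∈ I, ¬ C.H.Adj x y) ∧
      ∀ v : V, (I ∩ C.L v).card = F₂ v


/-- The internal vertices of a walk (its support minus its two endpoints). -/
def internals {V : Type} {G : SimpleGraph V} {a b : V} (p : G.Walk a b) : List V :=
  p.support.tail.dropLast

/-- `G` is a subdivision of `H` in which each edge of `H` is replaced by pairwise internally
disjoint paths, each of length at least `minLen`.  The data consists of an injection `f` of
the vertices of `H` into those of `G` and, for each (ordered) edge of `H`, a path of `G`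
between the images of its endpoints such that: the two orientations of an edge give the same
path (reversed); the paths have length at least `minLen`; internal vertices of the paths avoid
the branch vertices `f w`; distinct edges of `H` give internally disjoint paths; every vertex
of `G` is a branch vertex or an internal vertex of one of the paths; and the edges of `G` are
exactly the edges of the paths. -/
structure IsPathSubdivision {VH VG : Type} (H : SimpleGraph VH) (G : SimpleGraph VG)
    (minLen : ℕ) where
  f : VH ↪ VG
  P : ∀ ⦃u v : VH⦄, H.Adj u v → G.Walk (f u) (f v)
  isPath : ∀ ⦃u v : VH⦄ (h : H.Adj u v), (P h).IsPath
  len : ∀ ⦃u v : VH⦄ (h : H.Adj u v), minLen ≤ (P h).length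
  symm : ∀ ⦃u v : VH⦄ (h : H.Adj u v), P h.symm = (P h).reverse
  internal_not_branch : ∀ ⦃u v : VH⦄ (h : H.Adj u v),
      ∀ x ∈ internals (P h), ∀ w : VH, x ≠ f w
  internals_disjoint : ∀ ⦃u v u' v' : VH⦄ (h : H.Adj u v) (h' : H.Adj u' v'),
      s(u, v) ≠ s(u', v') → ∀ x ∈ internals (P h), x ∉ internals (P h')
  cover_vertices : ∀ x : VG, (∃ w : VH, x = f w) ∨
      ∃ (u v : VH) (h : H.Adj u v), x ∈ internals (P h)
  cover_edges : ∀ x y : VG, G.Adj x y ↔ ∃ (u v : VH) (h : H.Adj u v), s(x, y) ∈ (P h).edges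

/-! ### Batches of operations -/

theorem ST4DegOn.step {G : SimpleGraph V} {A : Finset V} {S T : V → ℕ} {u : V} {W : Finset V}
    (hl : LegalStep G ⟨A, S, T⟩ u W) (hW : W.card ≤ 1)
    (h : ST4DegOn G (applyStep G ⟨A, S, T⟩ u W).A (applyStep G ⟨A, S, T⟩ u W).S
      (applyStep G ⟨A, S, T⟩ u W).T) : ST4DegOn G A S T := by
  obtain ⟨l, h1, h2, h3⟩ := h
  refine ⟨(u, W) :: l, ⟨hl, h1⟩, ?_, h3⟩
  intro op hop
  rcases List.mem_cons.1 hop with rfl | hop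
  · exact hW
  · exact h2 op hop

/-- Only the values of the shield and of the target on the active set matter. -/
theorem ST4DegOn.congr {G : SimpleGraph V} {A : Finset V} {S T S' T' : V → ℕ}
    (hS : ∀ v ∈ A, S' v = S v) (hT : ∀ v ∈ A, T' v = T v)
    (h : ST4DegOn G A S' T') : ST4DegOn G A S T := by
  obtain ⟨l, h1, h2, h3⟩ := h
  induction l generalizing A S T S' T' with
  | nil => exact ⟨[], trivial, by simp, h3⟩
  | cons op l ih =>
    obtain ⟨hl, hr⟩ := h1
    obtain ⟨u, W⟩ := op
    obtain ⟨l1, l2, l3, l4⟩ := hl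
    simp only at l1 l2 l3 l4
    have hu := hT u l1
    have hA : (applyStep G ⟨A, S', T'⟩ u W).A = (applyStep G ⟨A, S, T⟩ u W).A := by
      simp [applyStep, hu]
    have hsub : (applyStep G ⟨A, S, T⟩ u W).A ⊆ A := by
      simp only [applyStep]; split_ifs
      · exact Finset.erase_subset _ _
      · exact Finset.Subset.refl _
    refine ST4DegOn.step (u := u) (W := W) ⟨l1, l2, ?_, ?_⟩ (h2 (u, W) (by simp)) ?_
    · have : ∑ w ∈ W, (S w + T w) = ∑ w ∈ W, (S' w + T' w) :=
        Finset.sum_congr rfl fun w hw => by rw [hS w (l2 w hw).1, hT w (l2 w hw).1]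
      simp only
      rw [this, ← hS u l1, ← hT u l1]; exact l3
    · intro v hv ha hw
      simp only
      rw [← hS v hv]; exact l4 v hv ha hw
    · refine ih (S' := (applyStep G ⟨A, S', T'⟩ u W).S) (T' := (applyStep G ⟨A, S', T'⟩ u W).T)
        ?_ ?_ ?_ ?_ ?_
      · intro v hv; simp [applyStep, hS v (hsub hv)]
      · intro v hv; simp [applyStep, hT v (hsub hv), hu]
      · rw [← hA]; exact hr
      · exact fun op hop => h2 op (List.mem_cons_of_mem _ hop)
      · rw [← hA]; exact h3

/-- Performing `c` operations on `u` in a row, all saving the same set `W` of at most one vertex.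
Each operation lowers `S u + T u` by one and leaves the saved vertex alone, so the `c` operations
are legal if `S u + T u` initially exceeds the sum at the saved vertex by at least `c`. The
vertex `u` is removed exactly if its target was `c`. -/
theorem ST4DegOn.batch {G : SimpleGraph V} {u : V} {W : Finset V} (hW : W.card ≤ 1)
    (c : ℕ) {A A' : Finset V} {S T S' T' : V → ℕ}
    (hu : u ∈ A) (hWA : ∀ w ∈ W, w ∈ A ∧ G.Adj u w) (hT1 : 1 ≤ T u) (hc : c ≤ T u)
    (hsave : ∀ w ∈ W, S w + T w + c ≤ S u + T u)
    (hhit : ∀ v ∈ A, G.Adj u v → v ∉ W → c ≤ S v)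
    (hA' : A' = if T u = c then A.erase u else A)
    (hS' : ∀ v ∈ A', S' v = if G.Adj u v ∧ v ∉ W then S v - c else S v)
    (hT' : ∀ v ∈ A', T' v = if v = u then T u - c else T v)
    (h : ST4DegOn G A' S' T') : ST4DegOn G A S T := by
  induction c generalizing A S T with
  | zero =>
    rw [if_neg (by omega)] at hA'
    subst hA'
    refine h.congr ?_ ?_
    · intro v hv; simp [hS' v hv]
    · intro v hv; rw [hT' v hv]; split_ifs with e <;> simp [e]
  | succ c ih =>
    have hlegal : LegalStep G ⟨A, S, T⟩ u W := by
      refine ⟨hu, hWA, ?_, fun v hv ha hw => ?_⟩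
      · simp only
        rcases Nat.le_one_iff_eq_zero_or_eq_one.1 hW with h0 | h0
        · rw [Finset.card_eq_zero.1 h0]; simp; omega
        · obtain ⟨w, rfl⟩ := Finset.card_eq_one.1 h0
          have := hsave w (by simp)
          simp; omega
      · have := hhit v hv ha hw
        simp only; omega
    refine ST4DegOn.step hlegal hW ?_
    by_cases hone : T u = 1
    · obtain rfl : c = 0 := by omega
      rw [if_pos (by omega)] at hA'
      have e : (applyStep G ⟨A, S, T⟩ u W).A = A' := by simp [applyStep, hone, hA']
      rw [e]
      refine h.congr ?_ ?_
      · intro v hv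
        have hvA : v ∈ A := by rw [hA'] at hv; exact Finset.mem_of_mem_erase hv
        rw [hS' v hv]; simp [applyStep, hvA]
      · intro v hv
        have hvu : v ≠ u := by rw [hA'] at hv; exact Finset.ne_of_mem_erase hv
        rw [hT' v hv]; simp [applyStep, hvu]
    · have e : (applyStep G ⟨A, S, T⟩ u W).A = A := by simp [applyStep, hone]
      rw [e]
      have hTu : (applyStep G ⟨A, S, T⟩ u W).T u = T u - 1 := by
        simp only [applyStep]; rw [if_pos ⟨trivial, by omega⟩]
      have hTv : ∀ v, v ≠ u → (applyStep G ⟨A, S, T⟩ u W).T v = T v := by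
        intro v hv; simp [applyStep, hv]
      have hSu : (applyStep G ⟨A, S, T⟩ u W).S u = S u := by simp [applyStep]
      have hSv : ∀ v ∈ A, (applyStep G ⟨A, S, T⟩ u W).S v =
          if G.Adj u v ∧ v ∉ W then S v - 1 else S v := by
        intro v hv; simp [applyStep, hv]
      have hsub : A' ⊆ A := by
        rw [hA']; split_ifs
        · exact Finset.erase_subset _ _
        · exact Finset.Subset.refl _
      refine ih hu hWA (by omega) (by omega) ?_ ?_ ?_ ?_ ?_
      · intro w hw
        have h1 := hsave w hw
        have h2 : w ≠ u := (hWA w hw).2.ne'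
        rw [hTu, hTv w h2, hSu, hSv w (hWA w hw).1, if_neg (by tauto)]
        omega
      · intro v hv ha hw
        have := hhit v hv ha hw
        rw [hSv v hv, if_pos ⟨ha, hw⟩]; omega
      · rw [hA', hTu]
        by_cases h1 : T u = c + 1
        · rw [if_pos h1, if_pos (by omega)]
        · rw [if_neg h1, if_neg (by omega)]
      · intro v hv
        rw [hS' v hv, hSv v (hsub hv)]
        split_ifs <;> omega
      · intro v hv
        rw [hT' v hv]
        by_cases h1 : v = u
        · rw [if_pos h1, if_pos h1, hTu]; omega
        · rw [if_neg h1, if_neg h1, hTv v h1]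

/-- Every vertex `u` of an independent set `U` performs `c` operations saving `W u`. Since no vertex
is hit by two members of `U`, the batches do not interfere, and it suffices to check legality in
the initial state. -/
theorem ST4DegOn.parallel {G : SimpleGraph V} {W : V → Finset V} (c : ℕ) (U : Finset V)
    {A A' : Finset V} {S T S' T' : V → ℕ}
    (hW : ∀ u ∈ U, (W u).card ≤ 1)
    (hU : U ⊆ A) (hWA : ∀ u ∈ U, ∀ w ∈ W u, w ∈ A ∧ G.Adj u w)
    (hind : ∀ u ∈ U, ∀ v ∈ U, ¬ G.Adj u v)
    (hT1 : ∀ u ∈ U, 1 ≤ T u) (hc : ∀ u ∈ U, c ≤ T u)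
    (hsave : ∀ u ∈ U, ∀ w ∈ W u, S w + T w + c ≤ S u + T u)
    (hhit : ∀ u ∈ U, ∀ v ∈ A, G.Adj u v → v ∉ W u → c ≤ S v)
    (huniq : ∀ u ∈ U, ∀ u' ∈ U, ∀ v ∈ A, G.Adj u v → v ∉ W u → G.Adj u' v → v ∉ W u' → u = u')
    (hA' : ∀ v, v ∈ A' ↔ v ∈ A ∧ ¬ (v ∈ U ∧ T v = c))
    (hS' : ∀ v ∈ A', S' v = if ∃ u ∈ U, G.Adj u v ∧ v ∉ W u then S v - c else S v)
    (hT' : ∀ v ∈ A', T' v = if v ∈ U then T v - c else T v)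
    (h : ST4DegOn G A' S' T') : ST4DegOn G A S T := by
  induction U using Finset.induction_on generalizing A S T with
  | empty =>
    obtain rfl : A' = A := by ext v; simp [hA']
    exact h.congr (fun v hv => by simp [hS' v hv]) (fun v hv => by simp [hT' v hv])
  | insert u U hu ih =>
    have huU := Finset.mem_insert_self u U
    have hin : ∀ {x}, x ∈ U → x ∈ insert u U := fun h => Finset.mem_insert_of_mem h
    have hne : ∀ {x}, x ∈ U → x ≠ u := fun h e => hu (e ▸ h)
    have huA : u ∈ A := hU huU
    have hmem : ∀ {x}, x ∈ (if T u = c then A.erase u else A) ↔ x ∈ A ∧ ¬ (x = u ∧ T u = c) := by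
      intro x
      split_ifs with e <;> simp [e]
      tauto
    refine ST4DegOn.batch (hW u huU) c huA (hWA u huU) (hT1 u huU) (hc u huU) (hsave u huU)
      (hhit u huU) (A' := if T u = c then A.erase u else A)
      (S' := fun v => if G.Adj u v ∧ v ∉ W u then S v - c else S v)
      (T' := fun v => if v = u then T u - c else T v) rfl (fun _ _ => rfl) (fun _ _ => rfl) ?_
    refine ih (fun x hx => hW x (hin hx)) ?_ ?_ (fun x hx y hy => hind x (hin hx) y (hin hy))
      ?_ ?_ ?_ ?_ ?_ ?_ ?_ ?_
    · intro x hx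
      exact hmem.2 ⟨hU (hin hx), fun h => hne hx h.1⟩
    · intro x hx w hw
      obtain ⟨h1, h2⟩ := hWA x (hin hx) w hw
      refine ⟨hmem.2 ⟨h1, fun h => ?_⟩, h2⟩
      exact hind x (hin hx) u huU (h.1 ▸ h2)
    · intro x hx; rw [if_neg (hne hx)]; exact hT1 x (hin hx)
    · intro x hx; rw [if_neg (hne hx)]; exact hc x (hin hx)
    · intro x hx w hw
      have h1 := hsave x (hin hx) w hw
      have h2 : w ≠ u := fun e => hind x (hin hx) u huU (e ▸ (hWA x (hin hx) w hw).2)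
      have h3 := hind u huU x (hin hx)
      have h4 : ¬ (G.Adj u x ∧ x ∉ W u) := fun h => h3 h.1
      rw [if_neg h2, if_neg (hne hx), if_neg h4]
      split_ifs <;> omega
    · intro x hx v hv ha hw
      have hvA := (hmem.1 hv).1
      have h1 : ¬ (G.Adj u v ∧ v ∉ W u) := fun h =>
        hne hx (huniq x (hin hx) u huU v hvA ha hw h.1 h.2)
      rw [if_neg h1]; exact hhit x (hin hx) v hvA ha hw
    · intro x hx x' hx' v hv
      exact huniq x (hin hx) x' (hin hx') v (hmem.1 hv).1
    · intro v
      rw [hA', hmem, Finset.mem_insert]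
      by_cases e : v = u
      · subst e; simp; tauto
      · simp [e]
    · intro v hv
      have hvA := ((hA' v).1 hv).1
      rw [hS' v hv]
      by_cases h1 : G.Adj u v ∧ v ∉ W u
      · rw [if_pos ⟨u, huU, h1⟩, if_neg, if_pos h1]
        rintro ⟨x, hx, h2, h3⟩
        exact hne hx (huniq x (hin hx) u huU v hvA h2 h3 h1.1 h1.2)
      · rw [if_neg h1]
        have : (∃ x ∈ insert u U, G.Adj x v ∧ v ∉ W x) ↔ ∃ x ∈ U, G.Adj x v ∧ v ∉ W x := by
          simp only [Finset.mem_insert, or_and_right, exists_or, exists_eq_left]; tauto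
        simp only [this]
    · intro v hv
      rw [hT' v hv]
      by_cases e : v = u
      · subst e; simp [hu]
      · simp [e]

/-! ### Levelled graphs -/

/-- A levelling of a subdivision whose paths have length at least `2 * r`. Level `0` consists of
the branch vertices; orienting every subdivided edge, an internal vertex `x` gets as level its
distance along the path to the terminal end, and `dn x`, `up x` are the next and the previous
vertex of that path. Thus `up x` is a branch vertex only if `x` is the first internal vertex, whose
level is at least `2 * r - 1`. The values of `up` and `dn` at level `0` are irrelevant. -/
structure IsLevelling (G : SimpleGraph V) (r : ℕ) (κ : V → ℕ) (up dn : V → V) : Prop where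
  branch : ∀ x y, κ x = 0 → κ y = 0 → ¬ G.Adj x y
  adj_iff : ∀ x, 1 ≤ κ x → ∀ y, G.Adj x y ↔ y = dn x ∨ y = up x
  level_dn : ∀ x, 1 ≤ κ x → κ (dn x) + 1 = κ x
  level_up : ∀ x, 1 ≤ κ x → κ (up x) = κ x + 1 ∨ (κ (up x) = 0 ∧ 2 * r - 1 ≤ κ x)

namespace IsLevelling

variable {G : SimpleGraph V} {r : ℕ} {κ : V → ℕ} {up dn : V → V}

theorem adj_dn (hL : IsLevelling G r κ up dn) {x : V} (hx : 1 ≤ κ x) : G.Adj x (dn x) :=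
  (hL.adj_iff x hx _).2 (Or.inl rfl)

theorem adj_up (hL : IsLevelling G r κ up dn) {x : V} (hx : 1 ≤ κ x) : G.Adj x (up x) :=
  (hL.adj_iff x hx _).2 (Or.inr rfl)

theorem consecutive (hL : IsLevelling G r κ up dn) {x y : V} (hx : 1 ≤ κ x) (hy : 1 ≤ κ y)
    (ha : G.Adj x y) : κ y + 1 = κ x ∨ κ y = κ x + 1 := by
  rcases (hL.adj_iff x hx y).1 ha with rfl | rfl
  · exact Or.inl (hL.level_dn x hx)
  · rcases hL.level_up x hx with h | h <;> omega

theorem eq_dn (hL : IsLevelling G r κ up dn) {x y : V} (hx : 1 ≤ κ x) (hy : 1 ≤ κ y)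
    (ha : G.Adj x y) (hk : κ y + 1 = κ x) : y = dn x := by
  rcases (hL.adj_iff x hx y).1 ha with h | rfl
  · exact h
  · rcases hL.level_up x hx with h | h <;> omega

theorem eq_up (hL : IsLevelling G r κ up dn) {x y : V} (hx : 1 ≤ κ x)
    (ha : G.Adj x y) (hk : κ y = κ x + 1) : y = up x := by
  rcases (hL.adj_iff x hx y).1 ha with rfl | h
  · have := hL.level_dn x hx; omega
  · exact h

theorem level_up_of_lt (hL : IsLevelling G r κ up dn) {x : V} (hx : 1 ≤ κ x)
    (hx' : κ x < 2 * r - 1) : κ (up x) = κ x + 1 := by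
  rcases hL.level_up x hx with h | h <;> omega

/-- Odd levels form an independent set, so they can be removed once nothing else is left. -/
theorem odd_levels (hL : IsLevelling G r κ up dn) (hr : 2 ≤ r) {A : Finset V}
    {S T : V → ℕ} (hA : ∀ v ∈ A, κ v % 2 = 1) (hT : ∀ v, κ v % 2 = 1 → T v = r) :
    ST4DegOn G A S T := by
  have hnadj : ∀ x y, κ x % 2 = 1 → κ y % 2 = 1 → ¬ G.Adj x y := by
    intro x y hx hy ha
    have := hL.consecutive (by omega) (by omega) ha
    omega
  refine ST4DegOn.parallel (W := fun _ => ∅) r A (A' := ∅) (S' := S) (T' := T) (by simp)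
    (Finset.Subset.refl _) (by simp) ?_ ?_ ?_ (by simp) ?_ ?_ ?_ (by simp) (by simp)
    ⟨[], trivial, by simp, rfl⟩
  · exact fun x hx y hy => hnadj x y (hA x hx) (hA y hy)
  · intro u hu; rw [hT u (hA u hu)]; omega
  · intro u hu; rw [hT u (hA u hu)]
  · exact fun x hx y hy ha => absurd ha (hnadj x y (hA x hx) (hA y hy))
  · exact fun x hx x' hx' y hy ha => absurd ha (hnadj x y (hA x hx) (hA y hy))
  · intro v
    simpa using fun h => ⟨h, hT v (hA v h)⟩

/-- The situation in which the even levels above `2 * j` have been removed during the downward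
sweep. A vertex of level `2 * j` has `j` operations left; it performs them saving its upper
neighbour, whose shield plus target is only `r`, and so uses up the `j` remaining units of shield of
its lower neighbour. -/
theorem sweepDown (hL : IsLevelling G r κ up dn) [Fintype V] (hr : 2 ≤ r) (j : ℕ)
    (hj : j ≤ r - 1) : ST4DegOn G
      (Finset.univ.filter fun v => κ v ≤ 2 * r - 1 ∧ (κ v % 2 = 1 ∨ (1 ≤ κ v ∧ κ v ≤ 2 * j)))
      (fun v => if κ v % 2 = 0 then r + 1 else if j < κ v / 2 + 1 then 0 else κ v / 2 + 1)
      (fun v => if κ v % 2 = 0 then κ v / 2 else r) := by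
  induction j with
  | zero =>
    exact hL.odd_levels hr (fun v hv => by
        simp only [Finset.mem_filter] at hv
        omega) (fun v hv => if_neg (by omega))
  | succ j ih =>
    refine ST4DegOn.parallel (W := fun u => {up u}) (j + 1)
      (Finset.univ.filter fun v => κ v = 2 * (j + 1))
      (by simp) ?_ ?_ ?_ ?_ ?_ ?_ ?_ ?_ ?_ ?_ ?_ (ih (by omega))
    all_goals
      simp only [Finset.subset_iff, Finset.mem_filter, Finset.mem_univ, true_and,
        Finset.mem_singleton]
    · intro x hx; omega
    · rintro u hu w rfl
      have := hL.level_up_of_lt (x := u) (by omega) (by omega)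
      exact ⟨by omega, hL.adj_up (by omega)⟩
    · intro x hx y hy ha
      have := hL.consecutive (by omega) (by omega) ha
      omega
    · intro u hu; rw [if_pos (by omega)]; omega
    · intro u hu; rw [if_pos (by omega)]; omega
    · rintro u hu w rfl
      have := hL.level_up_of_lt (x := u) (by omega) (by omega)
      split_ifs <;> omega
    · intro u hu v hv ha hw
      have hk := hL.consecutive (x := u) (y := v) (by omega) (by omega) ha
      have h2 := mt (hL.eq_up (x := u) (y := v) (by omega) ha) hw
      split_ifs <;> omega
    · intro u hu u' hu' v hv ha hw ha' hw'
      have hk := hL.consecutive (x := u) (y := v) (by omega) (by omega) ha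
      have h2 := mt (hL.eq_up (x := u) (y := v) (by omega) ha) hw
      rw [hL.eq_up (x := v) (y := u) (by omega) ha.symm (by omega),
        hL.eq_up (x := v) (y := u') (by omega) ha'.symm (by omega)]
    · intro v
      split_ifs <;> omega
    · intro v hv
      have key : (∃ u, κ u = 2 * (j + 1) ∧ G.Adj u v ∧ ¬ v = up u) ↔ κ v = 2 * j + 1 := by
        constructor
        · rintro ⟨u, hu, ha, hw⟩
          have hk := hL.consecutive (x := u) (y := v) (by omega) (by omega) ha
          have h2 := mt (hL.eq_up (x := u) (y := v) (by omega) ha) hw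
          omega
        · intro hk
          have h1 := hL.level_up_of_lt (x := v) (by omega) (by omega)
          refine ⟨up v, by omega, (hL.adj_up (by omega)).symm, fun e => ?_⟩
          rcases hL.level_up (up v) (by omega) with h | h
          · rw [← e] at h; omega
          · rw [← e] at h; omega
      simp only [key]
      clear key
      split_ifs <;> omega
    · intro v hv
      split_ifs <;> omega

/-- The situation in which the even levels below `2 * (r - i)` have been treated by the upward
sweep, where a vertex of level `2 * j` performs `r - j` operations saving its lower neighbour. That
neighbour has shield plus target at most `r + j` (for `j = 1`, at most `r + 1`), while the vertex
itself starts from `2 * r + 1`. The `i` even levels from `2 * (r - i)` to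
`2 * (r - 1)` remain to be treated. -/
theorem sweepUp (hL : IsLevelling G r κ up dn) [Fintype V] (hr : 2 ≤ r) (i : ℕ)
    (hi : i ≤ r - 1) : ST4DegOn G
      (Finset.univ.filter fun v => 1 ≤ κ v ∧ κ v ≤ 2 * r - 1)
      (fun v => if κ v % 2 = 0 then r + 1 else if κ v = 1 then 1 else
        if κ v / 2 < r - i then (if κ v = 2 * r - 1 then 0 else κ v / 2 + 1)
        else (if κ v = 2 * r - 1 then 1 else r + 1))
      (fun v => if κ v % 2 = 0 ∧ κ v < 2 * (r - i) then κ v / 2 else r) := by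
  induction i with
  | zero =>
    have e : (Finset.univ.filter fun v => 1 ≤ κ v ∧ κ v ≤ 2 * r - 1) =
        Finset.univ.filter fun v => κ v ≤ 2 * r - 1 ∧
          (κ v % 2 = 1 ∨ (1 ≤ κ v ∧ κ v ≤ 2 * (r - 1))) := by
      ext v; simp only [Finset.mem_filter, Finset.mem_univ, true_and]; omega
    rw [e]
    refine (hL.sweepDown hr (r - 1) le_rfl).congr ?_ ?_
    all_goals
      intro v hv
      simp only [Finset.mem_filter, Finset.mem_univ, true_and] at hv
      split_ifs <;> omega
  | succ i ih =>
    refine ST4DegOn.parallel (W := fun u => {dn u}) (i + 1)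
      (Finset.univ.filter fun v => κ v = 2 * (r - (i + 1)))
      (by simp) ?_ ?_ ?_ ?_ ?_ ?_ ?_ ?_ ?_ ?_ ?_ (ih (by omega))
    all_goals
      simp only [Finset.subset_iff, Finset.mem_filter, Finset.mem_univ, true_and,
        Finset.mem_singleton]
    · intro x hx; omega
    · rintro u hu w rfl
      have := hL.level_dn u (by omega)
      exact ⟨by omega, hL.adj_dn (by omega)⟩
    · intro x hx y hy ha
      have := hL.consecutive (by omega) (by omega) ha
      omega
    · intro u hu; rw [if_neg (by omega)]; omega
    · intro u hu; rw [if_neg (by omega)]; omega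
    · rintro u hu w rfl
      have := hL.level_dn u (by omega)
      split_ifs <;> omega
    · intro u hu v hv ha hw
      have hk := hL.consecutive (x := u) (y := v) (by omega) (by omega) ha
      have h2 := mt (hL.eq_dn (x := u) (y := v) (by omega) (by omega) ha) hw
      split_ifs <;> omega
    · intro u hu u' hu' v hv ha hw ha' hw'
      have hk := hL.consecutive (x := u) (y := v) (by omega) (by omega) ha
      have h2 := mt (hL.eq_dn (x := u) (y := v) (by omega) (by omega) ha) hw
      rw [hL.eq_dn (x := v) (y := u) (by omega) (by omega) ha.symm (by omega),
        hL.eq_dn (x := v) (y := u') (by omega) (by omega) ha'.symm (by omega)]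
    · intro v
      split_ifs <;> omega
    · intro v hv
      have key : (∃ u, κ u = 2 * (r - (i + 1)) ∧ G.Adj u v ∧ ¬ v = dn u) ↔
          κ v = 2 * (r - (i + 1)) + 1 := by
        constructor
        · rintro ⟨u, hu, ha, hw⟩
          have hk := hL.consecutive (x := u) (y := v) (by omega) (by omega) ha
          have h2 := mt (hL.eq_dn (x := u) (y := v) (by omega) (by omega) ha) hw
          omega
        · intro hk
          have h1 := hL.level_dn v (by omega)
          refine ⟨dn v, by omega, (hL.adj_dn (by omega)).symm, fun e => ?_⟩
          have h := hL.level_dn (dn v) (by omega)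
          rw [← e] at h; omega
      simp only [key]
      clear key
      split_ifs <;> omega
    · intro v hv
      split_ifs <;> omega

/-- The situation in which the branch vertices and all levels above `n ≥ 2 * r - 1` have been
removed: a vertex has lost `r` units of shield if one of its neighbours is gone. -/
theorem trim (hL : IsLevelling G r κ up dn) [Fintype V] (hr : 2 ≤ r) (n : ℕ)
    (hn : 2 * r - 1 ≤ n) : ST4DegOn G
      (Finset.univ.filter fun v => 1 ≤ κ v ∧ κ v ≤ n)
      (fun v => if κ v = 1 ∨ κ (up v) = 0 ∨ n < κ (up v) then 1 else r + 1)
      (fun _ => r) := by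
  induction n, hn using Nat.le_induction with
  | base =>
    refine (hL.sweepUp hr (r - 1) le_rfl).congr ?_ ?_
    all_goals
      intro v hv
      simp only [Finset.mem_filter, Finset.mem_univ, true_and] at hv
      have := hL.level_up v (by omega)
      split_ifs <;> omega
  | succ n hn ih =>
    refine ST4DegOn.parallel (W := fun _ => ∅) r (Finset.univ.filter fun v => κ v = n + 1)
      (by simp) ?_ (by simp) ?_ ?_ ?_ (by simp) ?_ ?_ ?_ ?_ ?_ ih
    all_goals
      simp only [Finset.subset_iff, Finset.mem_filter, Finset.mem_univ, true_and,
        Finset.notMem_empty, not_false_eq_true, and_true, forall_const]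
    · intro x hx; omega
    · intro x hx y hy ha
      have := hL.consecutive (by omega) (by omega) ha
      omega
    · intro u hu; omega
    · intro u hu; omega
    · intro u hu v hv ha
      have hk := hL.consecutive (x := u) (y := v) (by omega) (by omega) ha
      have h2 := hL.eq_up (x := v) (y := u) (by omega) ha.symm (by omega)
      rw [if_neg (by rw [← h2]; omega)]
      omega
    · intro u hu u' hu' v hv ha ha'
      have hk := hL.consecutive (x := u) (y := v) (by omega) (by omega) ha
      rw [hL.eq_up (x := v) (y := u) (by omega) ha.symm (by omega),
        hL.eq_up (x := v) (y := u') (by omega) ha'.symm (by omega)]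
    · intro v; omega
    · intro v hv
      have hk := hL.level_up v (by omega)
      have key : (∃ u, κ u = n + 1 ∧ G.Adj u v) ↔ κ (up v) = n + 1 := by
        constructor
        · rintro ⟨u, hu, ha⟩
          have hk := hL.consecutive (x := u) (y := v) (by omega) (by omega) ha
          rw [← hL.eq_up (x := v) (y := u) (by omega) ha.symm (by omega), hu]
        · exact fun h => ⟨up v, h, (hL.adj_up (by omega)).symm⟩
      simp only [key]
      clear key
      split_ifs <;> omega
    · intro v hv
      rw [if_neg (by omega)]

theorem st4Deg (hL : IsLevelling G r κ up dn) [Fintype V] (hr : 2 ≤ r) :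
    ST4Deg G (fun _ => r + 1) (fun _ => r) := by
  have hn : ∀ v, κ v ≤ Finset.univ.sup κ := fun v => Finset.le_sup (Finset.mem_univ v)
  refine ST4DegOn.parallel (W := fun _ => ∅) r (Finset.univ.filter fun v => κ v = 0)
    (by simp) ?_ (by simp) ?_ ?_ ?_ (by simp) ?_ ?_ ?_ ?_ ?_
    (hL.trim hr (Finset.univ.sup κ + 2 * r) (by omega))
  all_goals
    simp only [Finset.subset_iff, Finset.mem_filter, Finset.mem_univ, true_and,
      Finset.notMem_empty, not_false_eq_true, and_true, forall_const]
  · intro x hx; trivial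
  · exact fun x hx y hy => hL.branch x y hx hy
  · intro u hu; omega
  · intro u hu; omega
  · intro u hu v ha; omega
  · intro u hu u' hu' v ha ha'
    have hv : 1 ≤ κ v := by
      by_contra h
      exact hL.branch u v hu (by omega) ha
    have h1 := hL.level_dn v hv
    have h2 := hL.level_up v hv
    rcases (hL.adj_iff v hv u).1 ha.symm with rfl | rfl <;>
      rcases (hL.adj_iff v hv u').1 ha'.symm with rfl | rfl <;> first | rfl | omega
  · intro v
    have := hn v
    omega
  · intro v hv
    have h1 := hL.level_dn v hv.1
    have h2 := hn (up v)
    have key : (∃ u, κ u = 0 ∧ G.Adj u v) ↔ κ v = 1 ∨ κ (up v) = 0 := by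
      constructor
      · rintro ⟨u, hu, ha⟩
        rcases (hL.adj_iff v hv.1 u).1 ha.symm with rfl | rfl <;> omega
      · rintro (h | h)
        · exact ⟨dn v, by omega, (hL.adj_dn hv.1).symm⟩
        · exact ⟨up v, h, (hL.adj_up hv.1).symm⟩
    simp only [key]
    clear key
    split_ifs <;> omega
  · intro v hv
    rw [if_neg (by omega)]

end IsLevelling

/-! ### Subdivisions are levelled -/

theorem mem_internals_iff {V : Type} {G : SimpleGraph V} {a b : V} (p : G.Walk a b) (x : V) :
    x ∈ internals p ↔ ∃ i, 0 < i ∧ i < p.length ∧ p.getVert i = x := by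
  unfold internals
  rw [List.mem_iff_getElem]
  simp only [List.length_dropLast, List.length_tail, SimpleGraph.Walk.length_support,
    List.getElem_dropLast, List.getElem_tail, SimpleGraph.Walk.support_getElem_eq_getVert]
  constructor
  · rintro ⟨i, hi, rfl⟩
    exact ⟨i + 1, by omega, by omega, rfl⟩
  · rintro ⟨i, h0, hi, rfl⟩
    exact ⟨i - 1, by omega, by rw [Nat.sub_add_cancel h0]⟩

namespace IsPathSubdivision

variable {VH VG : Type} {H : SimpleGraph VH} {G : SimpleGraph VG} {m : ℕ}

/-- `x` is an internal vertex of the path of some edge of `H`, at distance `c ≥ 1` along the path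
from its terminal end. The injective numbering `ι` of `V(H)` selects one of the two orientations
of every edge. -/
def OnPath (D : IsPathSubdivision H G m) (ι : VH → ℕ) (x : VG) (c : ℕ) : Prop :=
  ∃ (u v : VH) (h : H.Adj u v), ι u < ι v ∧
    ∃ i, 0 < i ∧ i < (D.P h).length ∧ (D.P h).getVert i = x ∧ c = (D.P h).length - i

/-- The distance of an internal vertex to the terminal end of its path, and `0` for branch
vertices. -/
def level (D : IsPathSubdivision H G m) (ι : VH → ℕ) (x : VG) : ℕ :=
  if h : ∃ c, D.OnPath ι x c then h.choose else 0

variable (D : IsPathSubdivision H G m) {ι : VH → ℕ}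

theorem not_branch {u v : VH} (h : H.Adj u v) {i : ℕ} (h0 : 0 < i) (hi : i < (D.P h).length)
    (w : VH) : (D.P h).getVert i ≠ D.f w :=
  D.internal_not_branch h _ ((mem_internals_iff _ _).2 ⟨i, h0, hi, rfl⟩) w

/-- An internal vertex determines its path and its position on it; in particular it is not an
endpoint of any path, so `i' ≤ length` need not be strict. -/
theorem index_unique {u v u' v' : VH} (h : H.Adj u v) (h' : H.Adj u' v')
    (hu : ι u < ι v) (hu' : ι u' < ι v') {i i' : ℕ} (h0 : 0 < i) (hi : i < (D.P h).length)
    (hi' : i' ≤ (D.P h').length) (e : (D.P h).getVert i = (D.P h').getVert i') :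
    u = u' ∧ v = v' ∧ i = i' := by
  have h0' : 0 < i' := by
    rcases Nat.eq_zero_or_pos i' with rfl | h1
    · exact absurd (by simpa using e) (D.not_branch h h0 hi u')
    · exact h1
  have hi'' : i' < (D.P h').length := by
    rcases hi'.lt_or_eq with h1 | rfl
    · exact h1
    · exact absurd (by simpa using e) (D.not_branch h h0 hi v')
  have hs : s(u, v) = s(u', v') := by
    by_contra hne
    exact D.internals_disjoint h h' hne _ ((mem_internals_iff _ _).2 ⟨i, h0, hi, rfl⟩)
      ((mem_internals_iff _ _).2 ⟨i', h0', hi'', e.symm⟩)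
  rcases Sym2.eq_iff.1 hs with ⟨rfl, rfl⟩ | ⟨rfl, rfl⟩
  · exact ⟨rfl, rfl, (D.isPath h).getVert_injOn hi.le hi' e⟩
  · omega

theorem level_getVert {u v : VH} (h : H.Adj u v) (hu : ι u < ι v) {i : ℕ} (h0 : 0 < i)
    (hi : i ≤ (D.P h).length) : D.level ι ((D.P h).getVert i) = (D.P h).length - i := by
  by_cases hex : ∃ c, D.OnPath ι ((D.P h).getVert i) c
  · rw [level, dif_pos hex]
    obtain ⟨u', v', h', hu', i', h0', hi', e, hc⟩ := hex.choose_spec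
    obtain ⟨rfl, rfl, rfl⟩ := D.index_unique h' h hu' hu h0' hi' hi e
    exact hc
  · rw [level, dif_neg hex]
    by_contra hne
    exact hex ⟨_, u, v, h, hu, i, h0, by omega, rfl, rfl⟩

theorem level_branch (w : VH) : D.level ι (D.f w) = 0 := by
  rw [level, dif_neg]
  rintro ⟨c, u, v, h, hu, i, h0, hi, e, hc⟩
  exact D.not_branch h h0 hi w e

theorem adj_iff_exists (hι : Function.Injective ι) (x y : VG) : G.Adj x y ↔
    ∃ (u v : VH) (h : H.Adj u v), ι u < ι v ∧
      ∃ i < (D.P h).length, s((D.P h).getVert i, (D.P h).getVert (i + 1)) = s(x, y) := by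
  rw [D.cover_edges]
  constructor
  · rintro ⟨u, v, h, he⟩
    rcases lt_trichotomy (ι u) (ι v) with hlt | heq | hlt
    · exact ⟨u, v, h, hlt, (SimpleGraph.Walk.mk_mem_edges_iff_exists _).1 he⟩
    · exact absurd (hι heq) h.ne
    · refine ⟨v, u, h.symm, hlt, (SimpleGraph.Walk.mk_mem_edges_iff_exists _).1 ?_⟩
      rw [D.symm h, SimpleGraph.Walk.edges_reverse, List.mem_reverse]
      exact he
  · rintro ⟨u, v, h, -, he⟩
    exact ⟨u, v, h, (SimpleGraph.Walk.mk_mem_edges_iff_exists _).2 he⟩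

theorem exists_neighbours {r : ℕ} (D : IsPathSubdivision H G (2 * r))
    (hι : Function.Injective ι) (x : VG) (hx : 1 ≤ D.level ι x) :
    ∃ up dn : VG, (∀ y, G.Adj x y ↔ y = dn ∨ y = up) ∧ D.level ι dn + 1 = D.level ι x ∧
      (D.level ι up = D.level ι x + 1 ∨ (D.level ι up = 0 ∧ 2 * r - 1 ≤ D.level ι x)) := by
  have hex : ∃ c, D.OnPath ι x c := by
    by_contra hex
    rw [level, dif_neg hex] at hx
    omega
  obtain ⟨c, u, v, h, hu, i, h0, hi, rfl, -⟩ := hex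
  have hlen := D.len h
  rw [D.level_getVert h hu h0 hi.le] at hx ⊢
  refine ⟨(D.P h).getVert (i - 1), (D.P h).getVert (i + 1), fun y => ?_, ?_, ?_⟩
  · constructor
    · intro ha
      obtain ⟨u', v', h', hu', j, hj, e⟩ := (D.adj_iff_exists hι _ _).1 ha
      rcases Sym2.eq_iff.1 e with ⟨e1, e2⟩ | ⟨e1, e2⟩
      · obtain ⟨rfl, rfl, rfl⟩ := D.index_unique h h' hu hu' h0 hi hj.le e1.symm
        exact Or.inl e2.symm
      · obtain ⟨rfl, rfl, rfl⟩ := D.index_unique h h' hu hu' h0 hi hj e2.symm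
        exact Or.inr e1.symm
    · rintro (rfl | rfl)
      · exact (D.P h).adj_getVert_succ hi
      · have := (D.P h).adj_getVert_succ (i := i - 1) (by omega)
        rw [Nat.sub_add_cancel h0] at this
        exact this.symm
  · rw [D.level_getVert h hu (by omega) (by omega)]; omega
  · rcases Nat.lt_or_ge 1 i with h1 | h1
    · left
      rw [D.level_getVert h hu (by omega) (by omega)]; omega
    · right
      obtain rfl : i = 1 := by omega
      refine ⟨?_, by omega⟩
      simpa using D.level_branch (ι := ι) u

theorem exists_levelling {r : ℕ} (hr : 2 ≤ r) [Fintype VH] (D : IsPathSubdivision H G (2 * r)) :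
    ∃ (κ : VG → ℕ) (up dn : VG → VG), IsLevelling G r κ up dn := by
  let ι : VH → ℕ := fun w => (Fintype.equivFin VH w : ℕ)
  have hι : Function.Injective ι := Fin.val_injective.comp (Fintype.equivFin VH).injective
  have hnb : ∀ x, ∃ up dn : VG, 1 ≤ D.level ι x →
      (∀ y, G.Adj x y ↔ y = dn ∨ y = up) ∧ D.level ι dn + 1 = D.level ι x ∧
      (D.level ι up = D.level ι x + 1 ∨ (D.level ι up = 0 ∧ 2 * r - 1 ≤ D.level ι x)) := by
    intro x
    by_cases hx : 1 ≤ D.level ι x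
    · obtain ⟨up, dn, h⟩ := D.exists_neighbours hι x hx
      exact ⟨up, dn, fun _ => h⟩
    · exact ⟨x, x, fun h => absurd h hx⟩
  choose up dn hud using hnb
  refine ⟨D.level ι, up, dn, ?_, fun x hx => (hud x hx).1, fun x hx => (hud x hx).2.1,
    fun x hx => (hud x hx).2.2⟩
  have key : ∀ {u v : VH} (h : H.Adj u v), ι u < ι v → ∀ j < (D.P h).length,
      1 ≤ D.level ι ((D.P h).getVert j) ∨ 1 ≤ D.level ι ((D.P h).getVert (j + 1)) := by
    intro u v h hu j hj
    have hlen := D.len h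
    rcases Nat.eq_zero_or_pos j with rfl | h0
    · right; rw [D.level_getVert h hu (by omega) (by omega)]; omega
    · left; rw [D.level_getVert h hu h0 hj.le]; omega
  intro x y hx hy ha
  obtain ⟨u, v, h, hu, j, hj, e⟩ := (D.adj_iff_exists hι _ _).1 ha
  have := key h hu j hj
  rcases Sym2.eq_iff.1 e with ⟨rfl, rfl⟩ | ⟨rfl, rfl⟩ <;> omega

end IsPathSubdivision

/-- Suppose `H` is a connected graph and `G` is a subdivision of `H` in which
every edge of `H` is replaced by internally disjoint paths each of length at least `2r`,
for some integer `r ≥ 2`.  Then `ST⁽⁴⁾*(G) ≤ 2 + 1/r`. -/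
theorem st4Star_subdivision {VH VG : Type} [Fintype VH] [Fintype VG]
    (H : SimpleGraph VH) (G : SimpleGraph VG) (r : ℕ) (hr : 2 ≤ r)
    (hH : H.Connected) (hsub : Nonempty (IsPathSubdivision H G (2 * r))) :
    ST4Star G ≤ 2 + 1 / (r : ℝ) := by
  obtain ⟨D⟩ := hsub
  obtain ⟨κ, up, dn, hL⟩ := D.exists_levelling hr
  refine csInf_le ⟨0, ?_⟩ ⟨r + 1, r, by omega, hL.st4Deg hr, ?_⟩
  · rintro x ⟨s, t, -, -, rfl⟩
    positivity
  · have : (r : ℝ) ≠ 0 := by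
      have : r ≠ 0 := by omega
      exact_mod_cast this
    push_cast
    field_simp
    ring

end StrictDeg
end
end

section
/- Suppose j ∈ {3,4}, G is a (possibly empty) graph, and S and T are a shield and a target of G. If G is ST^(j)-(S,T)-degenerate, then G is ST^(j)-(kS,kT)-degenerate for every k ∈ ℕ, where kS and kT denote the pointwise scalar multiples of S and T. -/
/-!
Scaling is realised by performing every operation `(u, W)` of the given sequence `k` times in a row.

Write `σ = S u + T u` and `τ = ∑_{w ∈ W} (S w + T w)`. Legality gives `σ ≥ τ + 1`. In the scaled
process, after `i < k` copies of the operation, the weight of `u` is `k σ - i` (its shield is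
untouched and its target has lost `i`), the weight of `W` is still `k τ`, and
`k σ - i ≥ k τ + (k - i) > k τ`; every unsaved neighbour `v` has shield `k S v - i ≥ k - i ≥ 1`.
So all `k` copies are legal (`blockState_legal`), and after them the scaled state is again
`k` times the original one (`scaled_of_blockState`). The multiple is only meaningful on the active
vertices, because the target of a deleted vertex keeps the junk value `1`. The sets `W` are not
changed, so restricted sequences stay restricted.
-/

open scoped Classical

noncomputable section

namespace StrictDeg

variable {V : Type}

/-- `Scaled k st st'`: on the common active set, `st'` is `k` times `st`, and the targets of `st`
are positive there. Nothing is required of inactive vertices. -/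
def Scaled (k : ℕ) (st st' : State V) : Prop :=
  st'.A = st.A ∧ ∀ v ∈ st.A, st'.S v = k * st.S v ∧ st'.T v = k * st.T v ∧ 1 ≤ st.T v

/-- `BlockState G k st u W i st'`: on the active set, `st'` is `k` times `st` with the effect of
`i` copies of the operation `(u, W)` subtracted, and no vertex has been deleted yet. The
subtractions are written additively to avoid truncation. -/
def BlockState (G : SimpleGraph V) (k : ℕ) (st : State V) (u : V) (W : Finset V) (i : ℕ)
    (st' : State V) : Prop :=
  st'.A = st.A ∧ ∀ v ∈ st.A,
    st'.S v + (if G.Adj u v ∧ v ∉ W then i else 0) = k * st.S v ∧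
    st'.T v + (if v = u then i else 0) = k * st.T v ∧ 1 ≤ st.T v

theorem blockState_legal {G : SimpleGraph V} {k i : ℕ} {st st' : State V} {u : V} {W : Finset V}
    (h : LegalStep G st u W) (hi : i < k) (hb : BlockState G k st u W i st') :
    LegalStep G st' u W := by
  obtain ⟨hu, hW, hsum, hnb⟩ := h
  obtain ⟨hA, hv⟩ := hb
  refine ⟨hA ▸ hu, fun w hw => ⟨hA ▸ (hW w hw).1, (hW w hw).2⟩, ?_, ?_⟩
  · have h1 : ∑ w ∈ W, (st'.S w + st'.T w) = k * ∑ w ∈ W, (st.S w + st.T w) := by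
      rw [Finset.mul_sum]
      refine Finset.sum_congr rfl fun w hw => ?_
      obtain ⟨a, b, -⟩ := hv w (hW w hw).1
      have hne : w ≠ u := fun e => G.loopless.irrefl u (e ▸ (hW w hw).2)
      rw [if_neg (by tauto)] at a
      rw [if_neg hne] at b
      rw [mul_add]
      omega
    obtain ⟨a, b, -⟩ := hv u hu
    rw [if_neg (fun e => G.loopless.irrefl u e.1)] at a
    rw [if_pos rfl] at b
    have h2 := Nat.mul_le_mul_left k (Nat.succ_le_of_lt hsum)
    rw [Nat.mul_succ, mul_add] at h2
    omega
  · intro v hvA hadj hvW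
    rw [hA] at hvA
    obtain ⟨a, -⟩ := hv v hvA
    rw [if_pos ⟨hadj, hvW⟩] at a
    have := Nat.mul_le_mul_left k (hnb v hvA hadj hvW)
    omega

/-- Before the last copy, an operation deletes nothing: the target of `u` is `k T u - i ≥ 2`. -/
theorem blockState_succ {G : SimpleGraph V} {k i : ℕ} {st st' : State V} {u : V} {W : Finset V}
    (h : LegalStep G st u W) (hi : i + 1 < k) (hb : BlockState G k st u W i st') :
    BlockState G k st u W (i + 1) (applyStep G st' u W) := by
  have hnb := (blockState_legal h (by omega) hb).2.2.2
  obtain ⟨hA, hv⟩ := hb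
  have hT : 2 ≤ st'.T u := by
    obtain ⟨-, b, c⟩ := hv u h.1
    rw [if_pos rfl] at b
    have := Nat.mul_le_mul_left k c
    omega
  refine ⟨by simp only [applyStep]; rw [if_neg (by omega), hA], fun v hvA => ?_⟩
  obtain ⟨a, b, c⟩ := hv v hvA
  have hn := hnb v (hA ▸ hvA)
  have hvA' : v ∈ st'.A := hA ▸ hvA
  refine ⟨?_, ?_, c⟩
  · by_cases hc : G.Adj u v ∧ v ∉ W
    · have := hn hc.1 hc.2
      simp only [applyStep, hc, hvA', not_false_eq_true, and_self, if_true] at a ⊢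
      omega
    · rw [if_neg hc] at a ⊢
      simp only [applyStep]
      rw [if_neg (by tauto)]
      exact a
  · by_cases hc : v = u
    · subst hc
      rw [if_pos rfl] at b ⊢
      simp only [applyStep]
      rw [if_pos ⟨trivial, by omega⟩]
      omega
    · rw [if_neg hc] at b ⊢
      simp only [applyStep]
      rw [if_neg (by tauto)]
      exact b

/-- The `k`-th copy of an operation completes the scaled version of the original operation;
in particular `u` is deleted in the scaled process exactly when it is deleted in the original. -/
theorem scaled_of_blockState {G : SimpleGraph V} {i : ℕ} {st st' : State V} {u : V} {W : Finset V}
    (h : LegalStep G st u W) (hb : BlockState G (i + 1) st u W i st') :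
    Scaled (i + 1) (applyStep G st u W) (applyStep G st' u W) := by
  have hnb' := (blockState_legal h (by omega) hb).2.2.2
  have hnb := h.2.2.2
  obtain ⟨hA, hv⟩ := hb
  obtain ⟨-, bu, cu⟩ := hv u h.1
  rw [if_pos rfl] at bu
  have hiff : st'.T u = 1 ↔ st.T u = 1 := by
    constructor
    · intro e
      have : (i + 1) * st.T u = (i + 1) * 1 := by omega
      exact Nat.eq_of_mul_eq_mul_left (by omega) this
    · intro e
      rw [e] at bu
      omega
  have hAA : (applyStep G st' u W).A = (applyStep G st u W).A := by
    simp only [applyStep, hiff, hA]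
  refine ⟨hAA, fun v hvA1 => ?_⟩
  have hvA : v ∈ st.A := by
    simp only [applyStep] at hvA1
    split_ifs at hvA1
    · exact Finset.mem_of_mem_erase hvA1
    · exact hvA1
  have hvA' : v ∈ st'.A := hA ▸ hvA
  obtain ⟨a, b, c⟩ := hv v hvA
  refine ⟨?_, ?_⟩
  · by_cases hc : G.Adj u v ∧ v ∉ W
    · have h1 := hnb v hvA hc.1 hc.2
      have h2 := hnb' v hvA' hc.1 hc.2
      simp only [applyStep, hc, hvA, hvA', not_false_eq_true, and_self, if_true] at a ⊢
      rw [Nat.mul_sub]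
      omega
    · rw [if_neg hc] at a
      simp only [applyStep]
      rw [if_neg (by tauto), if_neg (by tauto)]
      exact a
  · by_cases hc : v = u
    · subst hc
      -- `v` is still active after the operation, so its target exceeded `1`.
      have h1 : st.T v ≠ 1 := by
        intro e
        simp [applyStep, e] at hvA1
      have h2 : st'.T v ≠ 1 := fun e => h1 (hiff.1 e)
      have h3 := Nat.mul_le_mul_left (i + 1) c
      simp only [applyStep]
      rw [if_pos ⟨trivial, by omega⟩, if_pos ⟨trivial, by omega⟩, Nat.mul_sub]
      omega
    · rw [if_neg hc] at b
      simp only [applyStep]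
      rw [if_neg (by tauto), if_neg (by tauto)]
      exact ⟨b, c⟩

theorem legalSeq_append {G : SimpleGraph V} (l₁ l₂ : List (V × Finset V)) (st : State V) :
    LegalSeq G st (l₁ ++ l₂) ↔ LegalSeq G st l₁ ∧ LegalSeq G (finalState G st l₁) l₂ := by
  induction l₁ generalizing st with
  | nil => simp [LegalSeq, finalState]
  | cons op l ih => simp [LegalSeq, finalState, ih, and_assoc]

theorem finalState_append {G : SimpleGraph V} (l₁ l₂ : List (V × Finset V)) (st : State V) :
    finalState G st (l₁ ++ l₂) = finalState G (finalState G st l₁) l₂ := by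
  simp [finalState]

theorem replicate_blockState {G : SimpleGraph V} {k : ℕ} {st st' : State V} {u : V} {W : Finset V}
    (h : LegalStep G st u W) (hs : Scaled k st st') (i : ℕ) (hi : i < k) :
    LegalSeq G st' (List.replicate i (u, W)) ∧
      BlockState G k st u W i (finalState G st' (List.replicate i (u, W))) := by
  induction i with
  | zero => exact ⟨trivial, hs.1, fun v hv => by simpa [finalState] using hs.2 v hv⟩
  | succ i ih =>
    obtain ⟨h1, h2⟩ := ih (by omega)
    rw [List.replicate_succ', legalSeq_append, finalState_append]
    exact ⟨⟨h1, blockState_legal h (by omega) h2, trivial⟩, blockState_succ h hi h2⟩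

/-- One operation of the original process is simulated by `k` copies in the scaled process. -/
theorem replicate_scaled {G : SimpleGraph V} {k : ℕ} (hk : 1 ≤ k) {st st' : State V} {u : V}
    {W : Finset V} (h : LegalStep G st u W) (hs : Scaled k st st') :
    LegalSeq G st' (List.replicate k (u, W)) ∧
      Scaled k (applyStep G st u W) (finalState G st' (List.replicate k (u, W))) := by
  obtain ⟨i, rfl⟩ : ∃ i, k = i + 1 := ⟨k - 1, by omega⟩
  obtain ⟨h1, h2⟩ := replicate_blockState h hs i (by omega)
  rw [List.replicate_succ', legalSeq_append, finalState_append]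
  exact ⟨⟨h1, blockState_legal h (by omega) h2, trivial⟩, scaled_of_blockState h h2⟩

theorem flatMap_scaled {G : SimpleGraph V} {k : ℕ} (hk : 1 ≤ k) (l : List (V × Finset V))
    {st st' : State V} (hl : LegalSeq G st l) (hs : Scaled k st st') :
    LegalSeq G st' (l.flatMap (List.replicate k)) ∧
      Scaled k (finalState G st l) (finalState G st' (l.flatMap (List.replicate k))) := by
  induction l generalizing st st' with
  | nil => exact ⟨trivial, hs⟩
  | cons op l ih =>
    obtain ⟨h1, h2⟩ := replicate_scaled hk hl.1 hs
    obtain ⟨h3, h4⟩ := ih hl.2 h2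
    rw [List.flatMap_cons, legalSeq_append, finalState_append]
    exact ⟨⟨h1, h3⟩, h4⟩

/-- Suppose `j ∈ {3,4}`, `G` is a (possibly empty) graph, and `S` and `T` are
a shield and a target of `G`.  If `G` is `ST⁽ʲ⁾`-`(S,T)`-degenerate, then `G` is
`ST⁽ʲ⁾`-`(kS,kT)`-degenerate for every `k ∈ ℕ` (so `k ≥ 1`). -/
theorem stDeg_smul {V : Type} [Fintype V] (G : SimpleGraph V)
    (S T : V → ℕ) (hT : ∀ v, 1 ≤ T v) (k : ℕ) (hk : 1 ≤ k) :
    (ST3Deg G S T → ST3Deg G (fun v => k * S v) (fun v => k * T v)) ∧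
    (ST4Deg G S T → ST4Deg G (fun v => k * S v) (fun v => k * T v)) := by
  have hs : Scaled k ⟨Finset.univ, S, T⟩ ⟨Finset.univ, fun v => k * S v, fun v => k * T v⟩ :=
    ⟨rfl, fun v _ => ⟨rfl, rfl, hT v⟩⟩
  constructor
  · rintro ⟨l, hl, hA⟩
    obtain ⟨h1, h2⟩ := flatMap_scaled hk l hl hs
    exact ⟨_, h1, h2.1.trans hA⟩
  · rintro ⟨l, hl, hc, hA⟩
    obtain ⟨h1, h2⟩ := flatMap_scaled hk l hl hs
    refine ⟨_, h1, fun op hop => ?_, h2.1.trans hA⟩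
    obtain ⟨op', hop', hmem⟩ := List.mem_flatMap.1 hop
    exact List.eq_of_mem_replicate hmem ▸ hc op' hop'

end StrictDeg
end
end
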